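/- Let L₀ > 0 and, for α ∈ {−1,+1}, let σ₂^α ∈ C¹([0,∞)) be nonnegative with σ₂^−(λ)/m₋² = σ₂^+(λ)/m₊² for all λ ≥ 0 and σ₂^α(λ) = 0 for λ > L₀. Define f₂^α(x,v) := σ₂^α(L^α(x,v)). Then each f₂^α is continuously differentiable and satisfies v·∂ₓ f₂^α(x,v) + (α e β/(c m_α)) v⊥·∂ᵥ f₂^α(x,v) = 0 for all (x,v) ∈ ℝ²×ℝ²; moreover the induced density ρ₂^α(x) := ∫_{ℝ²} f₂^α(x,v) dv is constant in x, namely ρ₂^α(x) = (β² e²/(c² m_α²)) ∫_{ℝ²} σ₂^α(½|w|²) dw for every x ∈ ℝ², and consequently ρ₂^− = ρ₂^+. -/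

import Mathlib

/-!
The map `(x, v) ↦ x + a • v⊥` is linear, and since `v⊥⊥ = -v` its kernel contains the direction
`(v, k • v⊥)` whenever `a * k = 1`. Hence any function of `x + a • v⊥` is constant along the line
through `(x, v)` in that direction, which is the transport equation (`fderiv_transport`).
Smoothness is the chain rule within `[0, ∞)`: the argument `½|x + a • v⊥|²` is a polynomial with
values in `[0, ∞)`, so one-sided differentiability of `σ` at `0` suffices (`contDiff_profile`).
For the density, `v ↦ x + a • v⊥` is a rotation followed by a dilation by `a` and a translation,
so the change of variables contributes the factor `a⁻²` (`integral_guiding_center`). The two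
densities agree because the masses cancel against the relation between `σ⁻` and `σ⁺`.
-/

open Real MeasureTheory Set Filter

noncomputable section

/-- The rotation `v ↦ v⊥ = (v₂, -v₁)` on `ℝ²`. -/
def vperp (v : ℝ × ℝ) : ℝ × ℝ := (v.2, -v.1)

/-- The squared Euclidean norm on `ℝ²`. -/
def sqnorm (x : ℝ × ℝ) : ℝ := x.1 ^ 2 + x.2 ^ 2

lemma sqnorm_half_nonneg (y : ℝ × ℝ) : 0 ≤ (1 / 2) * sqnorm y := by
  unfold sqnorm; positivity

/-- `v ↦ v⊥` preserves Lebesgue measure, being a coordinate swap followed by a reflection. -/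
lemma measurePreserving_vperp :
    MeasurePreserving vperp (volume : Measure (ℝ × ℝ)) volume :=
  ((MeasurePreserving.id (volume : Measure ℝ)).prod
    (Measure.measurePreserving_neg (volume : Measure ℝ))).comp Measure.measurePreserving_swap

lemma measurableEmbedding_vperp : MeasurableEmbedding vperp :=
  ((MeasurableEquiv.prodComm (α := ℝ) (β := ℝ)).trans
    ((MeasurableEquiv.refl ℝ).prodCongr (MeasurableEquiv.neg ℝ))).measurableEmbedding

/-- The change of variables `w = x + a • v⊥`. If `F` is not integrable or `a = 0`,
both sides vanish by the conventions for the Bochner integral and for `0⁻¹`. -/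
lemma integral_guiding_center (F : ℝ × ℝ → ℝ) (a : ℝ) (x : ℝ × ℝ) :
    ∫ v : ℝ × ℝ, F (x + a • vperp v) = (a ^ 2)⁻¹ * ∫ w : ℝ × ℝ, F w := by
  rw [measurePreserving_vperp.integral_comp measurableEmbedding_vperp (fun w => F (x + a • w)),
    Measure.integral_comp_smul volume (fun w => F (x + w)) a, integral_add_left_eq_self F x]
  simp

lemma contDiff_profile {σ : ℝ → ℝ} (hσ : ContDiffOn ℝ 1 σ (Set.Ici 0)) (a : ℝ)
    {f : (ℝ × ℝ) × (ℝ × ℝ) → ℝ}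
    (hf : ∀ x v : ℝ × ℝ, f (x, v) = σ ((1 / 2) * sqnorm (x + a • vperp v))) :
    ContDiff ℝ 1 f := by
  have hL : ContDiff ℝ 1
      (fun p : (ℝ × ℝ) × (ℝ × ℝ) => (1 / 2) * sqnorm (p.1 + a • vperp p.2)) := by
    simp only [sqnorm, vperp, Prod.fst_add, Prod.snd_add, Prod.smul_fst, Prod.smul_snd,
      smul_eq_mul]
    fun_prop
  have hcomp : f = σ ∘ fun p => (1 / 2) * sqnorm (p.1 + a • vperp p.2) :=
    funext fun p => hf p.1 p.2
  rw [hcomp]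
  exact hσ.comp_contDiff hL fun p => sqnorm_half_nonneg _

lemma fderiv_transport {F : ℝ × ℝ → ℝ} {a k : ℝ} (hak : a * k = 1)
    {f : (ℝ × ℝ) × (ℝ × ℝ) → ℝ} (hfd : Differentiable ℝ f)
    (hf : ∀ x v : ℝ × ℝ, f (x, v) = F (x + a • vperp v)) (x v : ℝ × ℝ) :
    fderiv ℝ f (x, v) (v, k • vperp v) = 0 := by
  have hconst : ∀ t : ℝ, f ((x, v) + t • (v, k • vperp v)) = f (x, v) := by
    intro t
    rw [Prod.smul_mk, Prod.mk_add_mk, hf, hf]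
    congr 1
    ext
    · simp only [vperp, Prod.fst_add, Prod.snd_add, Prod.smul_fst, Prod.smul_snd, smul_eq_mul]
      linear_combination (-t * v.1) * hak
    · simp only [vperp, Prod.fst_add, Prod.snd_add, Prod.smul_fst, Prod.smul_snd, smul_eq_mul]
      linear_combination (-t * v.2) * hak
  rw [← (hfd (x, v)).lineDeriv_eq_fderiv, lineDeriv]
  simp only [hconst, deriv_const]

/-- steady states depending only on `L^α(x,v) = ½|x + α (c m_α/(e β)) v⊥|²`;
the induced spatial densities are constant in `x` and coincide for the two species. -/
theorem stmt2
    (e c β mminus mplus L₀ : ℝ) (he : 0 < e) (hc : 0 < c) (hβ : 0 < β)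
    (hmm : 0 < mminus) (hmp : 0 < mplus) (hL₀ : 0 < L₀)
    (σm σp : ℝ → ℝ)
    (hσmC1 : ContDiffOn ℝ 1 σm (Set.Ici 0)) (hσpC1 : ContDiffOn ℝ 1 σp (Set.Ici 0))
    (hσmpos : ∀ lam : ℝ, 0 ≤ lam → 0 ≤ σm lam) (hσppos : ∀ lam : ℝ, 0 ≤ lam → 0 ≤ σp lam)
    (hmatch : ∀ lam : ℝ, 0 ≤ lam → σm lam / mminus ^ 2 = σp lam / mplus ^ 2)
    (hvanm : ∀ lam : ℝ, L₀ < lam → σm lam = 0) (hvanp : ∀ lam : ℝ, L₀ < lam → σp lam = 0)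
    (fm fp : (ℝ × ℝ) × (ℝ × ℝ) → ℝ)
    (hfm : ∀ x v : ℝ × ℝ,
      fm (x, v) = σm ((1/2) * sqnorm (x + ((-1) * (c * mminus / (e * β))) • vperp v)))
    (hfp : ∀ x v : ℝ × ℝ,
      fp (x, v) = σp ((1/2) * sqnorm (x + (1 * (c * mplus / (e * β))) • vperp v))) :
    ContDiff ℝ 1 fm ∧ ContDiff ℝ 1 fp ∧
    (∀ x v : ℝ × ℝ,
      fderiv ℝ fm (x, v) (v, ((-1) * e * β / (c * mminus)) • vperp v) = 0) ∧
    (∀ x v : ℝ × ℝ,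
      fderiv ℝ fp (x, v) (v, (1 * e * β / (c * mplus)) • vperp v) = 0) ∧
    (∀ x : ℝ × ℝ, (∫ v : ℝ × ℝ, fm (x, v))
      = (β ^ 2 * e ^ 2 / (c ^ 2 * mminus ^ 2)) * ∫ w : ℝ × ℝ, σm ((1/2) * sqnorm w)) ∧
    (∀ x : ℝ × ℝ, (∫ v : ℝ × ℝ, fp (x, v))
      = (β ^ 2 * e ^ 2 / (c ^ 2 * mplus ^ 2)) * ∫ w : ℝ × ℝ, σp ((1/2) * sqnorm w)) ∧
    (∀ x : ℝ × ℝ, (∫ v : ℝ × ℝ, fm (x, v)) = ∫ v : ℝ × ℝ, fp (x, v)) := by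
  have hfmC := contDiff_profile hσmC1 _ hfm
  have hfpC := contDiff_profile hσpC1 _ hfp
  have hIm : ∀ x : ℝ × ℝ, (∫ v : ℝ × ℝ, fm (x, v))
      = (β ^ 2 * e ^ 2 / (c ^ 2 * mminus ^ 2)) * ∫ w : ℝ × ℝ, σm ((1/2) * sqnorm w) := by
    intro x
    simp only [hfm]
    rw [integral_guiding_center (fun w => σm ((1/2) * sqnorm w))]
    congr 1
    field_simp
    try norm_num
  have hIp : ∀ x : ℝ × ℝ, (∫ v : ℝ × ℝ, fp (x, v))
      = (β ^ 2 * e ^ 2 / (c ^ 2 * mplus ^ 2)) * ∫ w : ℝ × ℝ, σp ((1/2) * sqnorm w) := by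
    intro x
    simp only [hfp]
    rw [integral_guiding_center (fun w => σp ((1/2) * sqnorm w))]
    congr 1
    field_simp
    try norm_num
  refine ⟨hfmC, hfpC,
    fderiv_transport (F := fun y => σm ((1/2) * sqnorm y)) (by field_simp; try norm_num)
      (hfmC.differentiable (by norm_num)) hfm,
    fderiv_transport (F := fun y => σp ((1/2) * sqnorm y)) (by field_simp; try norm_num)
      (hfpC.differentiable (by norm_num)) hfp,
    hIm, hIp, fun x => ?_⟩
  have hσ : ∀ w : ℝ × ℝ, σm ((1/2) * sqnorm w)
      = (mminus ^ 2 / mplus ^ 2) * σp ((1/2) * sqnorm w) := by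
    intro w
    have h := hmatch _ (sqnorm_half_nonneg w)
    rw [div_eq_iff (by positivity)] at h
    rw [h]
    ring
  rw [hIm, hIp]
  simp only [hσ]
  rw [integral_const_mul]
  field_simp
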